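/- Let f : S → ℂ be a non-zero solution of the integral Van Vleck equation, and define g : S → ℂ by g(x) := (Σ_{i∈I} c_i f(x z_i)) / (Σ_{i∈I} c_i f(z_i)) (the denominator being non-zero). Then there exists a non-zero multiplicative function χ : S → ℂ (i.e. χ(xy) = χ(x)χ(y) for all x, y ∈ S) such that g(x) = (χ(x) + χ(τ(x)))/2 for all x ∈ S. -/

import Mathlib

/-!
Write `F x = ∫ f(xt) dμ(t)` and `d = ∫ f dμ`, so that the equation reads
`F(xτ(y)) - F(xy) = 2f(x)f(y)`. Moving a central `t` across it gives
`f(x)f(yt) - f(xt)f(y) = f(xτ(y))f(t)`, and integrating over `t` yields the sine subtraction law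
`d f(xτ(y)) = f(x)F(y) - F(x)f(y)`. Since `f` is odd under `τ`, it cannot be proportional to `F`:
otherwise `F` would be odd too, hence zero at `xτ(x)` and `τ(x)x`, and the equation at `(x, x)` and
`(τ(x), x)` would force `f(x) = 0`. This gives `d ≠ 0`. Expanding `f(xyw)` in two ways shows that
the defect `d F(xy) - F(x)F(y)` is odd in `y`; together with non-proportionality this makes `F`
even and gives `d F(xy) = F(x)F(y) - d f(x)f(y)`. So `F` and `f` obey the addition laws of cosine
and sine, and `χ = (F + αf)/d` with `α² = -d` is multiplicative.
-/

/-- The Van Vleck equation with the function `F` on the left-hand side decoupled from `f`. The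
integral equation is the case `F x = ∫ f (x * t) dμ(t)`; the involution `τ` is written `star`. -/
def IsVanVleckPair {S R : Type*} [Mul S] [Star S] [CommRing R] (f F : S → R) : Prop :=
  ∀ x y, F (x * star y) - F (x * y) = 2 * f x * f y

/-- The subtraction law of the sine, `f` playing the sine and `d⁻¹ • F` the cosine. It is stated
without division because `d ≠ 0` is a consequence for Van Vleck pairs with `f ≠ 0`. -/
def SineSubtractionLaw {S R : Type*} [Mul S] [Star S] [CommRing R] (d : R) (f F : S → R) : Prop :=
  ∀ x y, d * f (x * star y) = f x * F y - F x * f y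

/-- The failure of `d⁻¹ • F` to be multiplicative at `(x, y)`, scaled by `d ^ 2` to avoid
division. -/
def mulDefect {S R : Type*} [Mul S] [CommRing R] (d : R) (F : S → R) (x y : S) : R :=
  d * F (x * y) - F x * F y

namespace IsVanVleckPair

variable {S R : Type*} [Semigroup S] [StarMul S] [CommRing R] [NoZeroDivisors R] [NeZero (2 : R)]
  {f F : S → R} {d : R}

theorem fst_star (h : IsVanVleckPair f F) (y : S) : f (star y) = -f y := by
  rcases eq_or_ne f 0 with rfl | hf
  · simp
  obtain ⟨a, ha⟩ := Function.ne_iff.1 hf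
  have hstar := h a (star y)
  rw [star_star] at hstar
  refine mul_left_cancel₀ (mul_ne_zero two_ne_zero ha) ?_
  linear_combination -h a y - hstar

theorem mul_sub_mul_of_mem_center (h : IsVanVleckPair f F) {t : S} (ht : t ∈ Set.center S)
    (x y : S) : f x * f (y * t) - f (x * t) * f y = f (x * star y) * f t := by
  have comm (s : S) : s * t = t * s := Semigroup.mem_center_iff.1 ht s
  have h_right : F (x * star y * star t) - F (x * y * t) = 2 * f x * f (y * t) := by
    have := h x (y * t)
    rwa [show star (y * t) = star y * star t by rw [comm, star_mul], ← mul_assoc,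
      ← mul_assoc] at this
  have h_left : F (x * star y * t) - F (x * y * t) = 2 * f (x * t) * f y := by
    have := h (x * t) y
    rwa [mul_assoc x t, ← comm, mul_assoc x t, ← comm, ← mul_assoc, ← mul_assoc] at this
  refine mul_left_cancel₀ (two_ne_zero (α := R)) ?_
  linear_combination h (x * star y) t - h_right + h_left

theorem sineSubtractionLaw {ι : Type*} {I : Finset ι} {c : ι → R} {z : ι → S}
    (hz : ∀ i ∈ I, z i ∈ Set.center S)
    (h : IsVanVleckPair f fun x => ∑ i ∈ I, c i * f (x * z i)) :
    SineSubtractionLaw (∑ i ∈ I, c i * f (z i)) f fun x => ∑ i ∈ I, c i * f (x * z i) := by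
  intro x y
  rw [Finset.mul_sum, Finset.sum_mul, Finset.sum_mul, ← Finset.sum_sub_distrib]
  refine Finset.sum_congr rfl fun i hi => ?_
  linear_combination -c i * h.mul_sub_mul_of_mem_center (hz i hi) x y

theorem eq_zero_of_proportional (h : IsVanVleckPair f F) (hprop : ∀ x y, f x * F y = F x * f y) :
    f = 0 := by
  by_contra hf
  obtain ⟨a, ha⟩ := Function.ne_iff.1 hf
  have F_odd (x : S) : F (star x) = -F x := by
    refine mul_left_cancel₀ ha ?_
    linear_combination hprop a (star x) + F a * h.fst_star x + hprop a x
  have F_eq_zero {x : S} (hx : star x = x) : F x = 0 := by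
    have := F_odd x
    rw [hx] at this
    refine (mul_eq_zero.1 ?_).resolve_left (two_ne_zero (α := R))
    linear_combination this
  have h_diag : F (a * a) = -2 * f a ^ 2 := by
    linear_combination -h a a + F_eq_zero (x := a * star a) (by simp)
  have h_star_diag : F (a * a) = 2 * f a ^ 2 := by
    have hstar := h (star a) a
    rw [← star_mul, F_odd, F_eq_zero (x := star a * a) (by simp), h.fst_star] at hstar
    linear_combination -hstar
  have : 2 * 2 * f a ^ 2 = 0 := by linear_combination h_diag - h_star_diag
  exact mul_ne_zero (mul_ne_zero two_ne_zero two_ne_zero) (pow_ne_zero 2 ha) this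

theorem coeff_ne_zero (h : IsVanVleckPair f F) (hs : SineSubtractionLaw d f F) (hf : f ≠ 0) :
    d ≠ 0 := by
  rintro rfl
  exact hf (h.eq_zero_of_proportional fun x y => by linear_combination -hs x y)

theorem mul_fst_mul (h : IsVanVleckPair f F) (hs : SineSubtractionLaw d f F) (x y : S) :
    d * f (x * y) = f x * F (star y) + F x * f y := by
  have hsub := hs x (star y)
  rw [star_star, h.fst_star] at hsub
  linear_combination hsub

theorem mul_mulDefect (h : IsVanVleckPair f F) (hs : SineSubtractionLaw d f F) (x y w : S) :
    f w * mulDefect d F x y = f x * mulDefect d F (star w) (star y) := by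
  have expand_left := h.mul_fst_mul hs (x * y) w
  have expand_right := h.mul_fst_mul hs x (y * w)
  rw [← mul_assoc, star_mul] at expand_right
  unfold mulDefect
  linear_combination d * (expand_right - expand_left) - F (star w) * h.mul_fst_mul hs x y +
    F x * h.mul_fst_mul hs y w

theorem mulDefect_star_right (h : IsVanVleckPair f F) (hs : SineSubtractionLaw d f F)
    (hf : f ≠ 0) (x y : S) : mulDefect d F x (star y) = -mulDefect d F x y := by
  by_cases hx : f x = 0
  · obtain ⟨a, ha⟩ := Function.ne_iff.1 hf
    have defect_eq_zero (y : S) : mulDefect d F x y = 0 := by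
      refine (mul_eq_zero.1 ?_).resolve_left ha
      rw [h.mul_mulDefect hs, hx, zero_mul]
    rw [defect_eq_zero, defect_eq_zero, neg_zero]
  · have hswap := h.mul_mulDefect hs x y (star x)
    rw [star_star, h.fst_star] at hswap
    refine mul_left_cancel₀ hx ?_
    linear_combination -hswap

theorem snd_mul_snd_star_sub (h : IsVanVleckPair f F) (hs : SineSubtractionLaw d f F)
    (hf : f ≠ 0) (x y : S) :
    F x * (F (star y) - F y) = 2 * (d * f x * f y + mulDefect d F x y) := by
  have hodd := h.mulDefect_star_right hs hf x y
  unfold mulDefect at hodd ⊢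
  linear_combination d * h x y - hodd

theorem snd_star (h : IsVanVleckPair f F) (hs : SineSubtractionLaw d f F)
    (hf : f ≠ 0) (y : S) : F (star y) = F y := by
  by_contra hne
  obtain ⟨a, ha⟩ := Function.ne_iff.1 hf
  have F_proportional (x : S) : F x * (f a * (F (star y) - F y)) =
      f x * (2 * (d * f a * f y + mulDefect d F (star a) (star y))) := by
    linear_combination f a * h.snd_mul_snd_star_sub hs hf x y + 2 * h.mul_mulDefect hs x y a
  refine hf (h.eq_zero_of_proportional fun u v => ?_)
  refine mul_right_cancel₀ (mul_ne_zero ha (sub_ne_zero.2 hne)) ?_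
  linear_combination f u * F_proportional v - f v * F_proportional u

theorem mulDefect_eq (h : IsVanVleckPair f F) (hs : SineSubtractionLaw d f F)
    (hf : f ≠ 0) (x y : S) : mulDefect d F x y = -d * f x * f y := by
  have hsum := h.snd_mul_snd_star_sub hs hf x y
  rw [h.snd_star hs hf, sub_self, mul_zero] at hsum
  have := (mul_eq_zero.1 hsum.symm).resolve_left two_ne_zero
  linear_combination this

end IsVanVleckPair

theorem IsVanVleckPair.exists_multiplicative {S K : Type*} [Semigroup S] [StarMul S] [Field K]
    [NeZero (2 : K)] {f F : S → K} {d : K} (h : IsVanVleckPair f F)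
    (hs : SineSubtractionLaw d f F) (hf : f ≠ 0) (hd : IsSquare (-d)) :
    ∃ χ : S → K, χ ≠ 0 ∧ (∀ x y, χ (x * y) = χ x * χ y) ∧
      ∀ x, F x / d = (χ x + χ (star x)) / 2 := by
  have hd0 := h.coeff_ne_zero hs hf
  obtain ⟨α, hα⟩ := hd
  refine ⟨fun x => (F x + α * f x) / d, fun hχ => hf ?_, fun x y => ?_, fun x => ?_⟩
  · have F_eq (x : S) : F x = -α * f x := by
      have := (div_eq_zero_iff.1 (congrFun hχ x)).resolve_right hd0
      linear_combination this
    exact h.eq_zero_of_proportional fun x y => by rw [F_eq, F_eq]; ring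
  · have cos_add := h.mulDefect_eq hs hf x y
    have sin_add := h.mul_fst_mul hs x y
    rw [h.snd_star hs hf] at sin_add
    unfold mulDefect at cos_add
    field_simp
    linear_combination cos_add + α * sin_add + f x * f y * hα
  · have : (2 : K) ≠ 0 := two_ne_zero
    simp only [h.snd_star hs hf, h.fst_star]
    field_simp
    ring

theorem stmt_8_general {S ι K : Type*} [Semigroup S] [StarMul S] [Field K] [IsAlgClosed K]
    [NeZero (2 : K)] {I : Finset ι} {c : ι → K} {z : ι → S} (hz : ∀ i ∈ I, z i ∈ Set.center S)
    {f : S → K} (hf : f ≠ 0) (hVV : IsVanVleckPair f fun x => ∑ i ∈ I, c i * f (x * z i)) :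
    (∑ i ∈ I, c i * f (z i)) ≠ 0 ∧
      ∃ χ : S → K, χ ≠ 0 ∧ (∀ x y, χ (x * y) = χ x * χ y) ∧
        ∀ x, (∑ i ∈ I, c i * f (x * z i)) / (∑ i ∈ I, c i * f (z i)) =
          (χ x + χ (star x)) / 2 :=
  have hs := hVV.sineSubtractionLaw hz
  ⟨hVV.coeff_ne_zero hs hf, hVV.exists_multiplicative hs hf (IsAlgClosed.exists_eq_mul_self _)⟩

theorem stmt_8 {S ι : Type*} [Semigroup S] (τ : S → S)
    (hτmul : ∀ x y : S, τ (x * y) = τ y * τ x)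
    (hτinv : ∀ x : S, τ (τ x) = x)
    (I : Finset ι) (c : ι → ℂ) (z : ι → S)
    (hz : ∀ i ∈ I, ∀ s : S, z i * s = s * z i)
    (f : S → ℂ) (hf : f ≠ 0)
(hVV : ∀ x y : S,
      (∑ i ∈ I, c i * f (x * τ y * z i)) - (∑ i ∈ I, c i * f (x * y * z i))
        = 2 * f x * f y)
    (g : S → ℂ)
    (hg : ∀ x : S, g x = (∑ i ∈ I, c i * f (x * z i)) / (∑ i ∈ I, c i * f (z i))) :
    ∃ χ : S → ℂ, χ ≠ 0 ∧ (∀ x y : S, χ (x * y) = χ x * χ y) ∧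
      ∀ x : S, g x = (χ x + χ (τ x)) / 2 := by
  let _ : StarMul S := { star := τ, star_involutive := hτinv, star_mul := hτmul }
  have z_central (i) (hi : i ∈ I) := Semigroup.mem_center_iff.2 fun s => (hz i hi s).symm
  obtain ⟨_, χ, hχ, χ_mul, h_eq⟩ := stmt_8_general z_central hf hVV
  exact ⟨χ, hχ, χ_mul, fun x => (hg x).trans (h_eq x)⟩
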